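/- Let λ > 0, let J be a finite index set, and let (x_j)_{j∈J} and (y_j)_{j∈J} be vectors in ℝ^d such that the linear span of {x_j : j ∈ J} has dimension at most r and the linear span of {y_j : j ∈ J} has dimension at most r. Let A = λ·I_d + ∑_{j∈J} x_j x_jᵀ and B = λ·I_d + ∑_{j∈J} y_j y_jᵀ. Then for every y ∈ ℝ^d: ‖y‖²_{A⁻¹} − ‖y‖²_{B⁻¹} ≤ (2√r/√λ)·‖y‖_{A⁻¹}·‖y‖_{B⁻¹}·√(∑_{j∈J} ‖x_j − y_j‖₂²). -/

import Mathlib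

open Matrix

/-!
Write `X` and `Y` for the matrices with rows `x j` and `y j`, and put `a = A⁻¹ v`, `b = B⁻¹ v`.
Testing the equation for `a` against `b` and the one for `b` against `a` gives
`⟪v, a⟫ - ⟪v, b⟫ = ⟪Y b, (Y - X) a⟫ + ⟪X a, (Y - X) b⟫`, whereas testing each against its own
solution gives `⟪v, a⟫ = λ ‖a‖² + ‖X a‖²` and `⟪v, b⟫ = λ ‖b‖² + ‖Y b‖²`. By Cauchy–Schwarz in `ℝ²`,
`√λ ‖a‖ ‖Y b‖ + ‖X a‖ √λ ‖b‖ ≤ √⟪v, a⟫ √⟪v, b⟫`, so the difference is at most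
`‖X - Y‖ / √λ * √⟪v, a⟫ √⟪v, b⟫` in the operator norm, which the Frobenius norm dominates.
The factor `√r` costs nothing: either `1 ≤ r`, or all the vectors vanish.
-/

open scoped Matrix.Norms.L2Operator RealInnerProductSpace

theorem mul_add_mul_le_sqrt_mul_sqrt (p q s t : ℝ) :
    p * q + s * t ≤ √(p ^ 2 + s ^ 2) * √(q ^ 2 + t ^ 2) := by
  simpa [Fin.sum_univ_two] using Real.sum_mul_le_sqrt_mul_sqrt Finset.univ ![p, s] ![q, t]

section RegularizedSolution

variable {E F : Type*} [NormedAddCommGroup E] [InnerProductSpace ℝ E]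
  [NormedAddCommGroup F] [InnerProductSpace ℝ F]

/-- `a` solves the regularized normal equation `(lam + X† X) a = v` of ridge regression. The
equation is stated weakly to avoid the adjoint, which Mathlib defines only on complete spaces. -/
def IsRegularizedSolution (lam : ℝ) (X : E →L[ℝ] F) (v a : E) : Prop :=
  ∀ w, ⟪v, w⟫ = lam * ⟪a, w⟫ + ⟪X a, X w⟫

namespace IsRegularizedSolution

variable {lam : ℝ} {X Y : E →L[ℝ] F} {v a b : E}

theorem inner_eq_sq_add_sq (ha : IsRegularizedSolution lam X v a) (hlam : 0 ≤ lam) :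
    ⟪v, a⟫ = (√lam * ‖a‖) ^ 2 + ‖X a‖ ^ 2 := by
  rw [ha a, real_inner_self_eq_norm_sq, real_inner_self_eq_norm_sq, mul_pow, Real.sq_sqrt hlam]

theorem inner_sub_inner_eq (ha : IsRegularizedSolution lam X v a)
    (hb : IsRegularizedSolution lam Y v b) :
    ⟪v, a⟫ - ⟪v, b⟫ = ⟪Y b, (Y - X) a⟫ + ⟪X a, (Y - X) b⟫ := by
  rw [hb a, ha b, real_inner_comm a b, _root_.sub_apply, _root_.sub_apply, inner_sub_right,
    inner_sub_right, real_inner_comm (X a) (Y b)]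
  ring

theorem abs_inner_sub_inner_le (ha : IsRegularizedSolution lam X v a)
    (hb : IsRegularizedSolution lam Y v b) (hlam : 0 < lam) :
    |⟪v, a⟫ - ⟪v, b⟫| ≤ ‖X - Y‖ / √lam * √⟪v, a⟫ * √⟪v, b⟫ := by
  have hsqrt : √lam ≠ 0 := (Real.sqrt_pos.2 hlam).ne'
  have hcross (u : F) (w : E) : |⟪u, (Y - X) w⟫| ≤ ‖u‖ * (‖X - Y‖ * ‖w‖) :=
    (abs_real_inner_le_norm _ _).trans <| by
      rw [norm_sub_rev X Y]
      gcongr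
      exact (Y - X).le_opNorm w
  calc |⟪v, a⟫ - ⟪v, b⟫|
      = |⟪Y b, (Y - X) a⟫ + ⟪X a, (Y - X) b⟫| := by rw [ha.inner_sub_inner_eq hb]
    _ ≤ ‖Y b‖ * (‖X - Y‖ * ‖a‖) + ‖X a‖ * (‖X - Y‖ * ‖b‖) :=
      (abs_add_le _ _).trans (add_le_add (hcross _ _) (hcross _ _))
    _ = ‖X - Y‖ / √lam * ((√lam * ‖a‖) * ‖Y b‖ + ‖X a‖ * (√lam * ‖b‖)) := by
      field_simp [hsqrt]
    _ ≤ ‖X - Y‖ / √lam * (√⟪v, a⟫ * √⟪v, b⟫) := by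
      rw [ha.inner_eq_sq_add_sq hlam.le, hb.inner_eq_sq_add_sq hlam.le,
        add_comm ((√lam * ‖b‖) ^ 2)]
      gcongr
      exact mul_add_mul_le_sqrt_mul_sqrt _ _ _ _
    _ = ‖X - Y‖ / √lam * √⟪v, a⟫ * √⟪v, b⟫ := by rw [mul_assoc]

end IsRegularizedSolution

end RegularizedSolution

section RegularizedGram

variable {m n : Type*} [Fintype m]

theorem transpose_mul_eq_sum_vecMulVec {l R : Type*} [NonUnitalNonAssocSemiring R]
    (X : Matrix m n R) (Y : Matrix m l R) : Xᵀ * Y = ∑ j, vecMulVec (X j) (Y j) := by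
  ext c c'
  simp [mul_apply, Matrix.sum_apply, vecMulVec_apply]

variable [DecidableEq n]

/-- The regularized Gram matrix `lam I + Xᵀ X` of the rows of `X`, the matrix that ridge regression
inverts. -/
def regularizedGram (lam : ℝ) (X : Matrix m n ℝ) : Matrix n n ℝ :=
  lam • 1 + Xᵀ * X

theorem regularizedGram_of (lam : ℝ) (x : m → n → ℝ) :
    regularizedGram lam (of x) = lam • 1 + ∑ j, vecMulVec (x j) (x j) := by
  rw [regularizedGram, transpose_mul_eq_sum_vecMulVec]
  rfl

theorem posDef_regularizedGram [Finite n] {lam : ℝ} (hlam : 0 < lam) (X : Matrix m n ℝ) :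
    (regularizedGram lam X).PosDef :=
  (PosDef.one.smul hlam).add_posSemidef (posSemidef_conjTranspose_mul_self X)

variable [Fintype n]

theorem regularizedGram_mulVec (lam : ℝ) (X : Matrix m n ℝ) (u : n → ℝ) :
    regularizedGram lam X *ᵥ u = lam • u + Xᵀ *ᵥ (X *ᵥ u) := by
  rw [regularizedGram, add_mulVec, smul_mulVec, one_mulVec, mulVec_mulVec]

theorem regularizedGram_mulVec_inv_mulVec {lam : ℝ} (hlam : 0 < lam) (X : Matrix m n ℝ)
    (v : n → ℝ) : regularizedGram lam X *ᵥ ((regularizedGram lam X)⁻¹ *ᵥ v) = v := by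
  have hdet := (isUnit_iff_isUnit_det _).1 (posDef_regularizedGram hlam X).isUnit
  rw [mulVec_mulVec, mul_nonsing_inv _ hdet, one_mulVec]

theorem isRegularizedSolution_inv_mulVec {lam : ℝ} (hlam : 0 < lam) (X : Matrix m n ℝ)
    (v : n → ℝ) :
    IsRegularizedSolution lam (toEuclideanLin X).toContinuousLinearMap
      (WithLp.toLp 2 v) (WithLp.toLp 2 ((regularizedGram lam X)⁻¹ *ᵥ v)) := by
  intro w
  set a := (regularizedGram lam X)⁻¹ *ᵥ v with ha
  have hv : v = lam • a + Xᵀ *ᵥ (X *ᵥ a) := by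
    rw [← regularizedGram_mulVec, ha, regularizedGram_mulVec_inv_mulVec hlam]
  have hadjoint : (Xᵀ *ᵥ (X *ᵥ a)) ⬝ᵥ w.ofLp = (X *ᵥ a) ⬝ᵥ (X *ᵥ w.ofLp) := by
    rw [mulVec_transpose, ← dotProduct_mulVec]
  simp only [EuclideanSpace.inner_eq_star_dotProduct, star_trivial,
    LinearMap.coe_toContinuousLinearMap', toLpLin_apply]
  rw [dotProduct_comm, hv, add_dotProduct, smul_dotProduct, hadjoint, smul_eq_mul,
    dotProduct_comm w.ofLp a, dotProduct_comm (X *ᵥ a)]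

end RegularizedGram

section L2OpNorm

variable {m n : Type*} [Fintype m] [Fintype n] [DecidableEq n]

theorem l2_opNorm_le_sqrt_sum_sq (X : Matrix m n ℝ) : ‖X‖ ≤ √(∑ j, ∑ c, X j c ^ 2) := by
  rw [l2_opNorm_def]
  refine ContinuousLinearMap.opNorm_le_bound _ (Real.sqrt_nonneg _) fun w ↦ ?_
  rw [EuclideanSpace.norm_eq, EuclideanSpace.norm_eq, ← Real.sqrt_mul (by positivity),
    Finset.sum_mul]
  gcongr with j
  simpa [mulVec, dotProduct] using Finset.sum_mul_sq_le_sq_mul_sq Finset.univ (X j) w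

theorem eq_zero_of_finrank_span_range_eq_zero {K V ι : Type*} [DivisionRing K] [AddCommGroup V]
    [Module K V] [Finite ι] {x : ι → V}
    (hx : Module.finrank K (Submodule.span K (Set.range x)) = 0) : x = 0 := by
  have := FiniteDimensional.span_of_finite K (Set.finite_range x)
  have hspan : Submodule.span K (Set.range x) = ⊥ := Submodule.finrank_eq_zero.1 hx
  exact funext fun i ↦ Submodule.span_eq_bot.1 hspan (x i) (Set.mem_range_self i)

theorem l2_opNorm_sub_le_sqrt_mul_sqrt_sum_sq {r : ℕ} {x y : m → n → ℝ}
    (hx : Module.finrank ℝ (Submodule.span ℝ (Set.range x)) ≤ r)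
    (hy : Module.finrank ℝ (Submodule.span ℝ (Set.range y)) ≤ r) :
    ‖of x - of y‖ ≤ √r * √(∑ j, ∑ c, (x j c - y j c) ^ 2) := by
  rcases r.eq_zero_or_pos with rfl | hr
  · simp [eq_zero_of_finrank_span_range_eq_zero (Nat.le_zero.1 hx),
      eq_zero_of_finrank_span_range_eq_zero (Nat.le_zero.1 hy)]
  · have hr' : 1 ≤ √(r : ℝ) := Real.one_le_sqrt.2 (mod_cast hr)
    exact (l2_opNorm_le_sqrt_sum_sq _).trans (le_mul_of_one_le_left (Real.sqrt_nonneg _) hr')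

theorem inv_norm_sq_diff_two_matrices_general {lam : ℝ} (hlam : 0 < lam) (X Y : Matrix m n ℝ)
    (v : n → ℝ) :
    |v ⬝ᵥ (regularizedGram lam X)⁻¹ *ᵥ v - v ⬝ᵥ (regularizedGram lam Y)⁻¹ *ᵥ v|
      ≤ ‖X - Y‖ / √lam * √(v ⬝ᵥ (regularizedGram lam X)⁻¹ *ᵥ v)
          * √(v ⬝ᵥ (regularizedGram lam Y)⁻¹ *ᵥ v) := by
  have h := (isRegularizedSolution_inv_mulVec hlam X v).abs_inner_sub_inner_le
    (isRegularizedSolution_inv_mulVec hlam Y v) hlam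
  rw [l2_opNorm_def, map_sub]
  simpa [EuclideanSpace.inner_toLp_toLp, dotProduct_comm] using h

end L2OpNorm

/-- with `A = λ I + ∑_{j∈J} x_j x_jᵀ` and `B = λ I + ∑_{j∈J} y_j y_jᵀ`,
both spans of dimension at most `r`, for every `y ∈ ℝ^d`:
`‖y‖²_{A⁻¹} − ‖y‖²_{B⁻¹} ≤ (2√r/√λ)‖y‖_{A⁻¹}‖y‖_{B⁻¹}√(∑_{j∈J}‖x_j − y_j‖₂²)`. -/
theorem inv_norm_sq_diff_two_matrices
    {d r : ℕ} {J : Type*} [Fintype J]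
    (lam : ℝ) (hlam : 0 < lam)
    (x y : J → (Fin d → ℝ))
    (hx : Module.finrank ℝ (Submodule.span ℝ (Set.range x)) ≤ r)
    (hy : Module.finrank ℝ (Submodule.span ℝ (Set.range y)) ≤ r)
    (A B : Matrix (Fin d) (Fin d) ℝ)
    (hA : A = lam • (1 : Matrix (Fin d) (Fin d) ℝ) + ∑ j, vecMulVec (x j) (x j))
    (hB : B = lam • (1 : Matrix (Fin d) (Fin d) ℝ) + ∑ j, vecMulVec (y j) (y j)) :
    ∀ v : Fin d → ℝ,
      v ⬝ᵥ A⁻¹.mulVec v - v ⬝ᵥ B⁻¹.mulVec v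
        ≤ (2 * Real.sqrt r / Real.sqrt lam)
            * Real.sqrt (v ⬝ᵥ A⁻¹.mulVec v) * Real.sqrt (v ⬝ᵥ B⁻¹.mulVec v)
            * Real.sqrt (∑ j, ∑ c, (x j c - y j c) ^ 2) := by
  intro v
  rw [← regularizedGram_of] at hA hB
  set p := √(v ⬝ᵥ A⁻¹ *ᵥ v) with hp
  set q := √(v ⬝ᵥ B⁻¹ *ᵥ v) with hq
  set S := √(∑ j, ∑ c, (x j c - y j c) ^ 2)
  calc v ⬝ᵥ A⁻¹ *ᵥ v - v ⬝ᵥ B⁻¹ *ᵥ v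
      ≤ ‖of x - of y‖ / √lam * p * q := by
        rw [hp, hq, hA, hB]
        exact (le_abs_self _).trans (inv_norm_sq_diff_two_matrices_general hlam _ _ v)
    _ ≤ √r * S / √lam * p * q := by
        gcongr
        exact l2_opNorm_sub_le_sqrt_mul_sqrt_sum_sq hx hy
    _ ≤ 2 * (√r * S / √lam * p * q) := le_mul_of_one_le_left (by positivity) one_le_two
    _ = 2 * √r / √lam * p * q * S := by ring
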